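/- arXiv:1608.02485 — 6 statements merged into one kernel-verified Lean document; each statement's English description precedes it below -/
import Mathlib

section
/- Let n ≥ 1, let σ² > 0 be a real number, let P ∈ ℝ^{n×n} be a symmetric positive semidefinite matrix, and set S = P(P + σ²I)⁻¹. Then for every integer ν ≥ 1, the matrix I − S is invertible, the boosting kernel P_ν := σ²(I − S)^{−ν} − σ²I satisfies that P_ν + σ²I is invertible, and the ℓ₂-boosting estimator coincides with the kernel-based estimator built from P_ν: S · Σ_{i=0}^{ν−1} (I − S)^i = P_ν (P_ν + σ²I)⁻¹. In particular, for every y ∈ ℝⁿ the boosting estimate ŷ(ν) = S Σ_{i=0}^{ν−1}(I − S)^i y equals P_ν(P_ν + σ²I)⁻¹ y. -/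
open Matrix BigOperators

/-- Proposition 1: the ℓ₂-boosting estimator coincides with the kernel-based
estimator built from the boosting kernel `Pν = σ²(I − S)^{−ν} − σ²I`. -/
theorem boosting_kernel_prop {n : ℕ} (hn : 1 ≤ n) (σ2 : ℝ) (hσ2 : 0 < σ2)
    (P : Matrix (Fin n) (Fin n) ℝ) (hP : P.PosSemidef)
    (S : Matrix (Fin n) (Fin n) ℝ)
    (hS : S = P * (P + σ2 • (1 : Matrix (Fin n) (Fin n) ℝ))⁻¹) :
    ∀ ν : ℕ, 1 ≤ ν →
      IsUnit (1 - S) ∧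
      IsUnit ((σ2 • ((1 - S)⁻¹) ^ ν - σ2 • 1) + σ2 • (1 : Matrix (Fin n) (Fin n) ℝ)) ∧
      S * ∑ i ∈ Finset.range ν, (1 - S) ^ i
        = (σ2 • ((1 - S)⁻¹) ^ ν - σ2 • 1) *
          ((σ2 • ((1 - S)⁻¹) ^ ν - σ2 • 1) + σ2 • 1)⁻¹ ∧
      ∀ y : Fin n → ℝ,
        (S * ∑ i ∈ Finset.range ν, (1 - S) ^ i) *ᵥ y
          = ((σ2 • ((1 - S)⁻¹) ^ ν - σ2 • 1) *
             ((σ2 • ((1 - S)⁻¹) ^ ν - σ2 • 1) + σ2 • 1)⁻¹) *ᵥ y := by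
  intro ν _
  have hA : IsUnit (P + σ2 • (1 : Matrix (Fin n) (Fin n) ℝ)) :=
    (Matrix.PosDef.posSemidef_add hP (Matrix.PosDef.one.smul hσ2)).isUnit
  have hAd := (Matrix.isUnit_iff_isUnit_det _).1 hA
  have hT : 1 - S = σ2 • (P + σ2 • (1 : Matrix (Fin n) (Fin n) ℝ))⁻¹ := by
    have h := Matrix.mul_nonsing_inv _ hAd
    rw [Matrix.add_mul, ← hS, Matrix.smul_mul, Matrix.one_mul] at h
    exact sub_eq_of_eq_add' h.symm
  have hU : IsUnit (1 - S) := by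
    refine IsUnit.of_mul_eq_one (σ2⁻¹ • (P + σ2 • (1 : Matrix (Fin n) (Fin n) ℝ))) ?_
    rw [hT, Matrix.smul_mul, Matrix.mul_smul, Matrix.nonsing_inv_mul _ hAd, smul_smul,
      mul_inv_cancel₀ hσ2.ne', one_smul]
  have hUd := (Matrix.isUnit_iff_isUnit_det _).1 hU
  have hpow : ((1 - S)⁻¹) ^ ν * (1 - S) ^ ν = 1 := by
    have hc : Commute ((1 - S)⁻¹) (1 - S) := by
      unfold Commute SemiconjBy
      rw [Matrix.nonsing_inv_mul _ hUd, Matrix.mul_nonsing_inv _ hUd]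
    rw [← hc.mul_pow, Matrix.nonsing_inv_mul _ hUd, one_pow]
  have hinv : (σ2 • ((1 - S)⁻¹) ^ ν) * (σ2⁻¹ • (1 - S) ^ ν) = 1 := by
    rw [Matrix.smul_mul, Matrix.mul_smul, hpow, smul_smul, mul_inv_cancel₀ hσ2.ne', one_smul]
  have key : S * ∑ i ∈ Finset.range ν, (1 - S) ^ i
        = (σ2 • ((1 - S)⁻¹) ^ ν - σ2 • 1) *
          ((σ2 • ((1 - S)⁻¹) ^ ν - σ2 • 1) + σ2 • 1)⁻¹ := by
    rw [sub_add_cancel, Matrix.inv_eq_right_inv hinv, Matrix.sub_mul, hinv, Matrix.smul_mul,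
      Matrix.one_mul, smul_smul, mul_inv_cancel₀ hσ2.ne', one_smul]
    have h := mul_neg_geom_sum (1 - S) ν
    rwa [sub_sub_cancel] at h
  refine ⟨hU, ?_, key, fun y => by rw [key]⟩
  rw [sub_add_cancel]
  exact IsUnit.of_mul_eq_one _ hinv
end

section
/- Let n ≥ 1, let σ² > 0 be a real number, let P ∈ ℝ^{n×n} be a symmetric positive semidefinite matrix, and set S = P(P + σ²I)⁻¹. For every integer ν ≥ 1, the matrix I − S is invertible and the boosting kernel P_ν := σ²(I − S)^{−ν} − σ²I satisfies P_ν(P_ν + σ²I)⁻¹ = I − (I − S)^ν. -/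
open Matrix

/-- Key step of Proposition 1: with `S = P(P + σ²I)⁻¹`, for every `ν ≥ 1`,
`I − S` is invertible and the boosting kernel `Pν = σ²(I − S)^{−ν} − σ²I`
satisfies `Pν(Pν + σ²I)⁻¹ = I − (I − S)^ν`. -/
theorem boosting_kernel_smoother {n : ℕ} (hn : 1 ≤ n) (σ2 : ℝ) (hσ2 : 0 < σ2)
    (P : Matrix (Fin n) (Fin n) ℝ) (hP : P.PosSemidef)
    (S : Matrix (Fin n) (Fin n) ℝ)
    (hS : S = P * (P + σ2 • (1 : Matrix (Fin n) (Fin n) ℝ))⁻¹) :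
    ∀ ν : ℕ, 1 ≤ ν →
      IsUnit (1 - S) ∧
      (σ2 • ((1 - S)⁻¹) ^ ν - σ2 • 1) *
        ((σ2 • ((1 - S)⁻¹) ^ ν - σ2 • 1) + σ2 • 1)⁻¹
        = 1 - (1 - S) ^ ν := by
  intro ν _
  have hQ : IsUnit (P + σ2 • (1 : Matrix (Fin n) (Fin n) ℝ)) :=
    (Matrix.PosDef.posSemidef_add hP (Matrix.PosDef.one.smul hσ2)).isUnit
  have hQd := (Matrix.isUnit_iff_isUnit_det _).1 hQ
  have h1S : 1 - S = σ2 • (P + σ2 • (1 : Matrix (Fin n) (Fin n) ℝ))⁻¹ := by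
    have h := Matrix.mul_nonsing_inv _ hQd
    rw [add_mul, ← hS, smul_mul_assoc, one_mul] at h
    exact sub_eq_of_eq_add' h.symm
  have hU : IsUnit (1 - S) := by
    refine IsUnit.of_mul_eq_one (σ2⁻¹ • (P + σ2 • (1 : Matrix (Fin n) (Fin n) ℝ))) ?_
    rw [h1S, smul_mul_smul_comm, Matrix.nonsing_inv_mul _ hQd, mul_inv_cancel₀ hσ2.ne', one_smul]
  refine ⟨hU, ?_⟩
  have hUd := (Matrix.isUnit_iff_isUnit_det _).1 hU
  have hpow : ((1 - S)⁻¹) ^ ν * (1 - S) ^ ν = 1 := by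
    have hc : Commute (1 - S)⁻¹ (1 - S) := by
      rw [Commute, SemiconjBy, Matrix.nonsing_inv_mul _ hUd, Matrix.mul_nonsing_inv _ hUd]
    rw [← hc.mul_pow, Matrix.nonsing_inv_mul _ hUd, one_pow]
  have hinv : (σ2 • ((1 - S)⁻¹) ^ ν)⁻¹ = σ2⁻¹ • (1 - S) ^ ν := by
    apply Matrix.inv_eq_right_inv
    rw [smul_mul_smul_comm, hpow, mul_inv_cancel₀ hσ2.ne', one_smul]
  rw [sub_add_cancel, hinv, sub_mul, smul_mul_smul_comm, smul_mul_smul_comm, hpow,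
    mul_inv_cancel₀ hσ2.ne', one_smul, one_smul, one_mul]
end

section
/- Let n ≥ 1, let σ² > 0 and λ > 0 be real numbers, let V ∈ ℝ^{n×n} be an orthogonal matrix, let D ∈ ℝ^{n×n} be diagonal with nonnegative diagonal entries d₁,…,dₙ, and set P_λ = λ V D Vᵀ and S = P_λ(P_λ + σ²I)⁻¹. Then for every integer ν ≥ 1, the boosting kernel satisfies P_ν := σ²(I − S)^{−ν} − σ²I = σ² V [ ((λD + σ²I)/σ²)^ν − I ] Vᵀ; in particular its (i,i)-th eigenvalue (the prior variance assigned by boosting to the i-th direction) is σ²(λdᵢ/σ² + 1)^ν − σ². -/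
open Matrix

/-- Representation (BoostingKer2): with `P_λ = λVDVᵀ` (`V` orthogonal, `D`
diagonal with nonnegative entries) and `S = P_λ(P_λ + σ²I)⁻¹`, the boosting
kernel is `σ²(I−S)^{−ν} − σ²I = σ² V[((λD + σ²I)/σ²)^ν − I]Vᵀ`; its diagonal
form has entries `σ²(λdᵢ/σ² + 1)^ν − σ²`. -/
theorem boosting_kernel_spectral {n : ℕ} (hn : 1 ≤ n) (σ2 lam : ℝ)
    (hσ2 : 0 < σ2) (hlam : 0 < lam)
    (V : Matrix (Fin n) (Fin n) ℝ) (hV : Vᵀ * V = 1)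
    (d : Fin n → ℝ) (hd : ∀ i, 0 ≤ d i)
    (Pl S : Matrix (Fin n) (Fin n) ℝ)
    (hPl : Pl = lam • (V * Matrix.diagonal d * Vᵀ))
    (hS : S = Pl * (Pl + σ2 • 1)⁻¹) :
    ∀ ν : ℕ, 1 ≤ ν →
      σ2 • ((1 - S)⁻¹) ^ ν - σ2 • 1
        = σ2 • (V * ((σ2⁻¹ • (lam • Matrix.diagonal d + σ2 • 1)) ^ ν - 1) * Vᵀ) ∧
      σ2 • ((1 - S)⁻¹) ^ ν - σ2 • 1
        = V * Matrix.diagonal (fun i => σ2 * (lam * d i / σ2 + 1) ^ ν - σ2) * Vᵀ := by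
  have hV' : V * Vᵀ = 1 := mul_eq_one_comm.mp hV
  have hmul : ∀ f g : Fin n → ℝ, (V * diagonal f * Vᵀ) * (V * diagonal g * Vᵀ)
      = V * diagonal (fun i => f i * g i) * Vᵀ := by
    intro f g
    calc (V * diagonal f * Vᵀ) * (V * diagonal g * Vᵀ)
        = V * diagonal f * (Vᵀ * V) * diagonal g * Vᵀ := by simp only [Matrix.mul_assoc]
      _ = _ := by rw [hV, Matrix.mul_one, Matrix.mul_assoc V, diagonal_mul_diagonal]
  have hone : V * diagonal (fun _ => (1 : ℝ)) * Vᵀ = 1 := by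
    rw [diagonal_one, Matrix.mul_one, hV']
  have hsmul : ∀ (a : ℝ) (f : Fin n → ℝ), a • (V * diagonal f * Vᵀ)
      = V * diagonal (fun i => a * f i) * Vᵀ := by
    intro a f
    have : diagonal (fun i => a * f i) = a • diagonal f := by
      rw [← diagonal_smul]; rfl
    rw [this, Matrix.mul_smul, Matrix.smul_mul]
  have hadd : ∀ f g : Fin n → ℝ, V * diagonal f * Vᵀ + V * diagonal g * Vᵀ
      = V * diagonal (fun i => f i + g i) * Vᵀ := by
    intro f g
    rw [← diagonal_add, Matrix.mul_add, Matrix.add_mul]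
  have hsub : ∀ f g : Fin n → ℝ, V * diagonal f * Vᵀ - V * diagonal g * Vᵀ
      = V * diagonal (fun i => f i - g i) * Vᵀ := by
    intro f g
    rw [← diagonal_sub, Matrix.mul_sub, Matrix.sub_mul]
  have hinv : ∀ f : Fin n → ℝ, (∀ i, f i ≠ 0) → (V * diagonal f * Vᵀ)⁻¹
      = V * diagonal (fun i => (f i)⁻¹) * Vᵀ := by
    intro f hf
    apply Matrix.inv_eq_right_inv
    rw [hmul, ← hone]
    congr 3
    funext i
    exact mul_inv_cancel₀ (hf i)
  have hpow : ∀ (f : Fin n → ℝ) (k : ℕ), (V * diagonal f * Vᵀ) ^ k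
      = V * diagonal (fun i => f i ^ k) * Vᵀ := by
    intro f k
    induction k with
    | zero => simp only [pow_zero]; exact hone.symm
    | succ k ih => rw [pow_succ, ih, hmul]; simp only [pow_succ]
  have hpos : ∀ i, lam * d i + σ2 * 1 ≠ 0 := fun i => by
    have := mul_nonneg hlam.le (hd i)
    linarith
  have hI : (1 - S)⁻¹ = V * diagonal (fun i => lam * d i / σ2 + 1) * Vᵀ := by
    apply Matrix.inv_eq_right_inv
    rw [hS, hPl, ← hone, hsmul, hsmul, hadd, hinv _ hpos, hmul, hsub, hmul]
    congr 3
    funext i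
    have := hpos i
    rw [mul_one] at this ⊢
    field_simp
    ring
  intro ν _
  have h2 : σ2 • ((1 - S)⁻¹) ^ ν - σ2 • 1
        = V * Matrix.diagonal (fun i => σ2 * (lam * d i / σ2 + 1) ^ ν - σ2) * Vᵀ := by
    rw [hI, hpow, ← hone, hsmul, hsmul, hsub]
    simp only [mul_one]
  refine ⟨?_, h2⟩
  rw [h2]
  have h3 : (σ2⁻¹ • (lam • Matrix.diagonal d + σ2 • (1 : Matrix (Fin n) (Fin n) ℝ)))
      = diagonal (fun i => lam * d i / σ2 + 1) := by
    rw [← diagonal_one, ← diagonal_smul, ← diagonal_smul, diagonal_add, ← diagonal_smul]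
    congr 1
    funext i
    simp only [Pi.smul_apply, smul_eq_mul]
    field_simp
  rw [h3, diagonal_pow, ← diagonal_one, diagonal_sub, hsmul]
  congr 3
  funext i
  simp only [Pi.pow_apply]
  ring
end

section
/- Let n ≥ 1, let σ² > 0 and λ > 0 be real numbers, let d₁,…,dₙ > 0 and z₁,…,zₙ be real numbers, and suppose λ dᵢ > zᵢ² − σ² for every i (i.e., λ exceeds max_i (zᵢ² − σ²)/dᵢ). Set αᵢ = σ²/(λdᵢ + σ²) ∈ (0,1) and J(ν) = Σ_{i=1}^n zᵢ² αᵢ^{2ν} + 2σ²n − 2σ² Σ_{i=1}^n αᵢ^ν (real powers). Then J is strictly increasing on [1,∞); in particular ν = 1 is the unique minimizer of J over [1,∞), i.e., SURE suggests performing no boosting iterations. -/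
open BigOperators

/-- One-term comparison. -/
lemma sure_term_lt (σ2 c z a b : ℝ) (hσ2 : 0 < σ2) (hc : 0 < c)
    (hz : z ^ 2 - σ2 < c) (ha : 1 ≤ a) (hab : a < b) :
    z ^ 2 * (σ2 / (c + σ2)) ^ (2 * a) - 2 * σ2 * (σ2 / (c + σ2)) ^ a
      < z ^ 2 * (σ2 / (c + σ2)) ^ (2 * b) - 2 * σ2 * (σ2 / (c + σ2)) ^ b := by
  have hs : 0 < c + σ2 := by linarith
  have h0 : 0 < σ2 / (c + σ2) := by positivity
  have h1 : σ2 / (c + σ2) < 1 := by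
    rw [div_lt_one hs]; linarith
  have hzα : z ^ 2 * (σ2 / (c + σ2)) < σ2 := by
    rw [← mul_div_assoc, div_lt_iff₀ hs]
    nlinarith
  generalize σ2 / (c + σ2) = α at *
  have hsq : ∀ t : ℝ, α ^ (2 * t) = (α ^ t) ^ 2 := by
    intro t
    rw [two_mul, Real.rpow_add h0, sq]
  have hxy : α ^ b < α ^ a := Real.rpow_lt_rpow_of_exponent_gt h0 h1 hab
  have hy : α ^ a ≤ α := by
    simpa using Real.rpow_le_rpow_of_exponent_ge h0 h1.le ha
  rw [hsq, hsq]
  generalize α ^ a = y at *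
  generalize α ^ b = x at *
  have h2 : z ^ 2 * (x + y) ≤ z ^ 2 * (2 * α) :=
    mul_le_mul_of_nonneg_left (by linarith) (sq_nonneg z)
  have h3 : 0 < (y - x) * (2 * σ2 - z ^ 2 * (x + y)) :=
    mul_pos (by linarith) (by linarith)
  nlinarith

/-- If `λdᵢ > zᵢ² − σ²` for all `i` (the weak learner is strong), the SURE
objective `J(ν) = Σᵢ zᵢ²αᵢ^{2ν} + 2σ²n − 2σ² Σᵢ αᵢ^ν`, with
`αᵢ = σ²/(λdᵢ + σ²)`, is strictly increasing on `[1,∞)`, so `ν = 1` is its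
unique minimizer there: SURE suggests no boosting iterations. -/
theorem sure_strong_learner_nu_one {n : ℕ} (hn : 1 ≤ n) (σ2 lam : ℝ)
    (hσ2 : 0 < σ2) (hlam : 0 < lam)
    (d z : Fin n → ℝ) (hd : ∀ i, 0 < d i)
    (hcond : ∀ i, (z i) ^ 2 - σ2 < lam * d i) :
    StrictMonoOn
      (fun ν : ℝ =>
        ∑ i : Fin n, (z i) ^ 2 * (σ2 / (lam * d i + σ2)) ^ (2 * ν)
          + 2 * σ2 * (n : ℝ)
          - 2 * σ2 * ∑ i : Fin n, (σ2 / (lam * d i + σ2)) ^ ν)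
      (Set.Ici 1) ∧
    ∀ ν ∈ Set.Ici (1 : ℝ), ν ≠ 1 →
      (∑ i : Fin n, (z i) ^ 2 * (σ2 / (lam * d i + σ2)) ^ (2 * (1 : ℝ))
          + 2 * σ2 * (n : ℝ)
          - 2 * σ2 * ∑ i : Fin n, (σ2 / (lam * d i + σ2)) ^ (1 : ℝ))
        < ∑ i : Fin n, (z i) ^ 2 * (σ2 / (lam * d i + σ2)) ^ (2 * ν)
          + 2 * σ2 * (n : ℝ)
          - 2 * σ2 * ∑ i : Fin n, (σ2 / (lam * d i + σ2)) ^ ν := by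
  have key : ∀ a b : ℝ, 1 ≤ a → a < b →
      (∑ i : Fin n, (z i) ^ 2 * (σ2 / (lam * d i + σ2)) ^ (2 * a)
          + 2 * σ2 * (n : ℝ)
          - 2 * σ2 * ∑ i : Fin n, (σ2 / (lam * d i + σ2)) ^ a)
        < ∑ i : Fin n, (z i) ^ 2 * (σ2 / (lam * d i + σ2)) ^ (2 * b)
          + 2 * σ2 * (n : ℝ)
          - 2 * σ2 * ∑ i : Fin n, (σ2 / (lam * d i + σ2)) ^ b := by
    intro a b ha hab
    have hne : (Finset.univ : Finset (Fin n)).Nonempty := ⟨⟨0, hn⟩, Finset.mem_univ _⟩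
    have h := Finset.sum_lt_sum_of_nonempty hne (fun i _ =>
      sure_term_lt σ2 (lam * d i) (z i) a b hσ2 (mul_pos hlam (hd i)) (hcond i) ha hab)
    rw [Finset.sum_sub_distrib, Finset.sum_sub_distrib, ← Finset.mul_sum,
      ← Finset.mul_sum] at h
    linarith
  refine ⟨fun a ha b _ hab => key a b ha hab, fun ν hν hne => ?_⟩
  exact key 1 ν le_rfl (lt_of_le_of_ne hν (Ne.symm hne))
end

section
/- Let n ≥ 1, let σ² > 0 and λ > 0 be real numbers, let d₁,…,dₙ > 0 and z₁,…,zₙ be real numbers, and suppose λ dᵢ < zᵢ² − σ² for every i (i.e., λ is below min_i (zᵢ² − σ²)/dᵢ). Set αᵢ = σ²/(λdᵢ + σ²) ∈ (0,1) and J(ν) = Σ_{i=1}^n zᵢ² αᵢ^{2ν} + 2σ²n − 2σ² Σ_{i=1}^n αᵢ^ν (real powers). Then the derivative of J at ν = 1 is strictly negative: J′(1) = 2 Σ_{i=1}^n log(αᵢ) αᵢ (zᵢ² αᵢ − σ²) < 0; consequently there exists ν > 1 with J(ν) < J(1), i.e., SURE favors performing boosting iterations. -/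
open BigOperators

/-- If `λdᵢ < zᵢ² − σ²` for all `i` (the weak learner is weak), the SURE
objective `J(ν) = Σᵢ zᵢ²αᵢ^{2ν} + 2σ²n − 2σ² Σᵢ αᵢ^ν`, `αᵢ = σ²/(λdᵢ + σ²)`,
has strictly negative derivative at `ν = 1`, namely
`J′(1) = 2 Σᵢ log(αᵢ)αᵢ(zᵢ²αᵢ − σ²) < 0`; hence some `ν > 1` improves on
`ν = 1`: SURE favors boosting. -/
theorem sure_weak_learner_boosting_helps {n : ℕ} (hn : 1 ≤ n) (σ2 lam : ℝ)
    (hσ2 : 0 < σ2) (hlam : 0 < lam)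
    (d z : Fin n → ℝ) (hd : ∀ i, 0 < d i)
    (hcond : ∀ i, lam * d i < (z i) ^ 2 - σ2) :
    deriv
        (fun ν : ℝ =>
          ∑ i : Fin n, (z i) ^ 2 * (σ2 / (lam * d i + σ2)) ^ (2 * ν)
            + 2 * σ2 * (n : ℝ)
            - 2 * σ2 * ∑ i : Fin n, (σ2 / (lam * d i + σ2)) ^ ν) 1
      = 2 * ∑ i : Fin n,
          Real.log (σ2 / (lam * d i + σ2)) * (σ2 / (lam * d i + σ2)) *
            ((z i) ^ 2 * (σ2 / (lam * d i + σ2)) - σ2) ∧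
    2 * ∑ i : Fin n,
        Real.log (σ2 / (lam * d i + σ2)) * (σ2 / (lam * d i + σ2)) *
          ((z i) ^ 2 * (σ2 / (lam * d i + σ2)) - σ2) < 0 ∧
    ∃ ν : ℝ, 1 < ν ∧
      (∑ i : Fin n, (z i) ^ 2 * (σ2 / (lam * d i + σ2)) ^ (2 * ν)
          + 2 * σ2 * (n : ℝ)
          - 2 * σ2 * ∑ i : Fin n, (σ2 / (lam * d i + σ2)) ^ ν)
        < ∑ i : Fin n, (z i) ^ 2 * (σ2 / (lam * d i + σ2)) ^ (2 * (1 : ℝ))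
          + 2 * σ2 * (n : ℝ)
          - 2 * σ2 * ∑ i : Fin n, (σ2 / (lam * d i + σ2)) ^ (1 : ℝ) := by
  have hpos : ∀ i, 0 < lam * d i + σ2 := fun i => by
    have := mul_pos hlam (hd i)
    linarith
  have hα0 : ∀ i, 0 < σ2 / (lam * d i + σ2) := fun i => div_pos hσ2 (hpos i)
  have hα1 : ∀ i, σ2 / (lam * d i + σ2) < 1 := fun i => by
    rw [div_lt_one (hpos i)]
    have := mul_pos hlam (hd i)
    linarith
  have hzα : ∀ i, 0 < (z i) ^ 2 * (σ2 / (lam * d i + σ2)) - σ2 := fun i => by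
    have h1 : lam * d i + σ2 < (z i) ^ 2 := by linarith [hcond i]
    have h2 := mul_lt_mul_of_pos_right h1 (hα0 i)
    rw [mul_div_cancel₀ _ (hpos i).ne'] at h2
    linarith
  generalize hα : (fun i => σ2 / (lam * d i + σ2)) = α at *
  have hαi : ∀ i, σ2 / (lam * d i + σ2) = α i := fun i => by rw [← hα]
  simp only [hαi] at *
  have hder : HasDerivAt (fun ν : ℝ =>
          ∑ i : Fin n, (z i) ^ 2 * (α i) ^ (2 * ν)
            + 2 * σ2 * (n : ℝ)
            - 2 * σ2 * ∑ i : Fin n, (α i) ^ ν)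
      (2 * ∑ i : Fin n, Real.log (α i) * (α i) * ((z i) ^ 2 * (α i) - σ2)) 1 := by
    have hA : HasDerivAt (fun ν : ℝ => ∑ i : Fin n, (z i) ^ 2 * (α i) ^ (2 * ν))
        (∑ i : Fin n, (z i) ^ 2 * (Real.log (α i) * 2 * (α i) ^ (2 * (1 : ℝ)))) 1 := by
      refine HasDerivAt.fun_sum fun i _ => ?_
      refine HasDerivAt.const_mul _ ?_
      have h2 : HasDerivAt (fun ν : ℝ => 2 * ν) 2 1 := by
        simpa using (hasDerivAt_id (1 : ℝ)).const_mul 2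
      exact h2.const_rpow (hα0 i)
    have hB : HasDerivAt (fun ν : ℝ => ∑ i : Fin n, (α i) ^ ν)
        (∑ i : Fin n, (Real.log (α i) * 1 * (α i) ^ (1 : ℝ))) 1 := by
      refine HasDerivAt.fun_sum fun i _ => ?_
      exact (hasDerivAt_id' (1 : ℝ)).const_rpow (hα0 i)
    refine ((hA.add_const (2 * σ2 * (n : ℝ))).sub (hB.const_mul (2 * σ2))).congr_deriv ?_
    rw [Finset.mul_sum, Finset.mul_sum, ← Finset.sum_sub_distrib]
    refine Finset.sum_congr rfl fun i _ => ?_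
    have h2 : (α i) ^ (2 * (1 : ℝ)) = (α i) ^ 2 := by
      rw [mul_one]
      exact Real.rpow_two _
    rw [h2, Real.rpow_one]
    ring
  have hneg : 2 * ∑ i : Fin n, Real.log (α i) * (α i) * ((z i) ^ 2 * (α i) - σ2) < 0 := by
    have : ∑ i : Fin n, Real.log (α i) * (α i) * ((z i) ^ 2 * (α i) - σ2) < 0 := by
      refine Finset.sum_neg (fun i _ => ?_) ⟨⟨0, hn⟩, Finset.mem_univ _⟩
      exact mul_neg_of_neg_of_pos
        (mul_neg_of_neg_of_pos (Real.log_neg (hα0 i) (hα1 i)) (hα0 i)) (hzα i)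
    linarith
  refine ⟨hder.deriv, hneg, ?_⟩
  have hs := (hasDerivAt_iff_tendsto_slope.1 hder).mono_left
    (nhdsWithin_mono (1 : ℝ) (fun x (hx : x ∈ Set.Ioi (1 : ℝ)) => ne_of_gt hx))
  obtain ⟨ν, h1, h2⟩ :=
    ((hs.eventually (gt_mem_nhds hneg)).and self_mem_nhdsWithin).exists
  have h3 : (1 : ℝ) < ν := h2
  refine ⟨ν, h3, ?_⟩
  rw [slope_def_field, div_lt_iff₀ (by linarith), zero_mul] at h1
  exact sub_neg.1 h1
end

section
/- Let n ≥ 1, let σ² > 0 be a real number, let P ∈ ℝ^{n×n} be a symmetric positive semidefinite matrix, and set S = P(P + σ²I)⁻¹. Then for every integer ν ≥ 1 the boosting kernel P_ν = σ²(I − S)^{−ν} − σ²I is symmetric and positive semidefinite. -/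
open Matrix

/-- The boosting kernel `P_ν = σ²(I − S)^{−ν} − σ²I`, with
`S = P(P + σ²I)⁻¹` for symmetric PSD `P` and `σ² > 0`, is symmetric and
positive semidefinite for every integer `ν ≥ 1`. -/
theorem boosting_kernel_posSemidef {n : ℕ} (hn : 1 ≤ n) (σ2 : ℝ) (hσ2 : 0 < σ2)
    (P S : Matrix (Fin n) (Fin n) ℝ) (hP : P.PosSemidef)
    (hS : S = P * (P + σ2 • (1 : Matrix (Fin n) (Fin n) ℝ))⁻¹)
    (ν : ℕ) (hν : 1 ≤ ν) :
    (σ2 • ((1 - S)⁻¹) ^ ν - σ2 • 1).PosSemidef := by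
  set T : Matrix (Fin n) (Fin n) ℝ := σ2⁻¹ • P with hT
  have hTp : T.PosSemidef := hP.smul (inv_nonneg.mpr hσ2.le)
  have hA : (P + σ2 • (1 : Matrix (Fin n) (Fin n) ℝ)).PosDef :=
    Matrix.PosDef.posSemidef_add hP (Matrix.PosDef.one.smul hσ2)
  have hdet := (Matrix.isUnit_iff_isUnit_det _).mp hA.isUnit
  have hinv : (1 - S)⁻¹ = T + 1 := by
    apply Matrix.inv_eq_left_inv
    have hQ : T + 1 = σ2⁻¹ • (P + σ2 • (1 : Matrix (Fin n) (Fin n) ℝ)) := by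
      rw [smul_add, smul_smul, inv_mul_cancel₀ hσ2.ne', one_smul]
    have h1 : 1 - S = σ2 • (P + σ2 • (1 : Matrix (Fin n) (Fin n) ℝ))⁻¹ := by
      have h2 := Matrix.mul_nonsing_inv _ hdet
      rw [add_mul, ← hS, smul_mul_assoc, one_mul] at h2
      rw [sub_eq_iff_eq_add', h2]
    rw [hQ, h1, smul_mul_smul_comm, Matrix.mul_nonsing_inv _ hdet, inv_mul_cancel₀ hσ2.ne',
      one_smul]
  rw [hinv, ← smul_sub]
  refine Matrix.PosSemidef.smul ?_ hσ2.le
  rw [(Commute.one_right T).add_pow, Finset.sum_range_succ']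
  simp only [one_pow, mul_one, pow_zero, Nat.choose_zero_right, Nat.cast_one, add_sub_cancel_right]
  refine Matrix.posSemidef_sum _ fun k _ => ?_
  rw [← nsmul_eq_mul']
  rw [← Nat.cast_smul_eq_nsmul ℝ]
  exact (hTp.pow _).smul (Nat.cast_nonneg _)
end
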